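/- Let i_0,…,i_s be distinct elements of {1,…,n} with s ≤ d, and let f_{s+1},…,f_d be homogeneous linear forms in the variables T_0,…,T_d. If the linear forms ℓ_{i_0},…,ℓ_{i_s}, f_{s+1},…,f_d are linearly independent over k, then the images of (X_{i_0},…,X_{i_s}, f_{s+1},…,f_d) form a regular sequence in R = S/(h_1,…,h_n). -/

import Mathlib

open MvPolynomial

/-- The polynomial `h_i = X_i^{p_i} − ℓ_i` in `S = k[T_0,…,T_d, X_1,…,X_n]`, where
`ℓ_i = Σ_j λ_{ij} T_j`; the `T`'s are the variables indexed by `Sum.inl` and the `X`'s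
are the variables indexed by `Sum.inr`. -/
noncomputable def GLh (k : Type*) [Field k] (d n : ℕ) (p : Fin n → ℕ)
    (lam : Fin n → Fin (d + 1) → k) (i : Fin n) :
    MvPolynomial (Fin (d + 1) ⊕ Fin n) k :=
  X (Sum.inr i) ^ p i - ∑ j, C (lam i j) * X (Sum.inl j)

/-- The Geigle–Lenzing complete intersection `R = S/(h_1, …, h_n)`. -/
abbrev GLring (k : Type*) [Field k] (d n : ℕ) (p : Fin n → ℕ)
    (lam : Fin n → Fin (d + 1) → k) : Type _ :=
  MvPolynomial (Fin (d + 1) ⊕ Fin n) k ⧸ Ideal.span (Set.range (GLh k d n p lam))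

/-!
The ring `R` is free over `A = k[T_0, …, T_d]`, with basis the monomials `∏ X_i ^ a_i`, `a_i < p_i`.
The forms `ℓ_{i_0}, …, ℓ_{i_s}, f_{s+1}, …, f_d` are the variables of `A` after a linear change of
coordinates, so they are a regular sequence in `A` and, by faithful flatness, in `R`. There
`ℓ_i = X_i ^ p_i`, and a regular sequence stays regular when its entries are replaced by roots.
-/

open RingTheory.Sequence
open scoped Pointwise TensorProduct

section RegularSequences

variable {R M : Type*} [CommRing R] [AddCommGroup M] [Module R M]

-- The first map is multiplication by `s`, the second is the quotient map.
theorem exists_shortExact_quotSMulTop {r s t : R} (ht : r * s = t) (hs : IsSMulRegular M s) :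
    ∃ (i : QuotSMulTop r M →ₗ[R] QuotSMulTop t M) (q : QuotSMulTop t M →ₗ[R] QuotSMulTop s M),
      Function.Injective i ∧ Function.Exact i q ∧ Function.Surjective q := by
  subst ht
  have mem_smul_top {a : R} {x : M} : x ∈ a • (⊤ : Submodule R M) ↔ ∃ y, a • y = x := by
    simp [Submodule.mem_smul_pointwise_iff_exists]
  have hi : r • (⊤ : Submodule R M) ≤
      ((r * s) • ⊤ : Submodule R M).comap (LinearMap.lsmul R M s) := by
    intro x hx
    obtain ⟨y, rfl⟩ := mem_smul_top.mp hx
    exact mem_smul_top.mpr ⟨y, by simp [smul_smul]⟩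
  have hq : (r * s) • (⊤ : Submodule R M) ≤ s • ⊤ := by
    intro x hx
    obtain ⟨y, rfl⟩ := mem_smul_top.mp hx
    exact mem_smul_top.mpr ⟨r • y, by simp [smul_smul, mul_comm]⟩
  refine ⟨Submodule.mapQ _ _ _ hi, Submodule.factor hq, ?_, ?_, Submodule.factor_surjective hq⟩
  · refine (injective_iff_map_eq_zero _).mpr <|
      (Submodule.mkQ_surjective _).forall.mpr fun x hx => ?_
    obtain ⟨y, hy⟩ := mem_smul_top.mp ((Submodule.Quotient.mk_eq_zero _).mp hx)
    refine (Submodule.Quotient.mk_eq_zero _).mpr (mem_smul_top.mpr ⟨y, hs ?_⟩)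
    simpa [smul_smul, mul_comm] using hy
  · refine (Submodule.mkQ_surjective _).forall.mpr fun x => ⟨fun hx => ?_, ?_⟩
    · obtain ⟨y, rfl⟩ := mem_smul_top.mp ((Submodule.Quotient.mk_eq_zero _).mp hx)
      exact ⟨Submodule.Quotient.mk y, rfl⟩
    · rintro ⟨y, hy⟩
      obtain ⟨y, rfl⟩ := Submodule.mkQ_surjective _ y
      rw [← hy]
      exact (Submodule.Quotient.mk_eq_zero _).mpr (mem_smul_top.mpr ⟨y, rfl⟩)

theorem injective_quotSMulTop_map {L N : Type*} [AddCommGroup L] [Module R L] [AddCommGroup N]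
    [Module R N] {r : R} {i : M →ₗ[R] L} {q : L →ₗ[R] N} (hi : Function.Injective i)
    (hiq : Function.Exact i q) (hr : IsSMulRegular N r) :
    Function.Injective (QuotSMulTop.map r i) := by
  have h₀ : Function.Exact (0 : M →ₗ[R] M) i := (LinearMap.exact_zero_iff_injective M i).mpr hi
  have h := QuotSMulTop.map_first_exact_on_four_term_exact_of_isSMulRegular_last h₀ hiq hr
  rw [map_zero] at h
  exact (LinearMap.exact_zero_iff_injective _ _).mp h

-- With a single exact sequence this fails: the second one makes each entry regular on `N` as well,
-- which is what keeps both sequences exact after reduction.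
theorem isWeaklyRegular_of_shortExact_of_shortExact {L N : Type*} [AddCommGroup L] [Module R L]
    [AddCommGroup N] [Module R N] {i : M →ₗ[R] L} {q : L →ₗ[R] N} {j : N →ₗ[R] L} {u : L →ₗ[R] M}
    (hi : Function.Injective i) (hiq : Function.Exact i q) (hq : Function.Surjective q)
    (hj : Function.Injective j) (hju : Function.Exact j u) (hu : Function.Surjective u)
    {rs : List R} (h : IsWeaklyRegular L rs) : IsWeaklyRegular M rs := by
  induction rs generalizing M L N with
  | nil => exact .nil R M
  | cons r rs ih =>
    obtain ⟨hr, hrs⟩ := (isWeaklyRegular_cons_iff L r rs).mp h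
    have hrM : IsSMulRegular M r := hr.of_injective i hi
    have hrN : IsSMulRegular N r := hr.of_injective j hj
    exact .cons hrM <| ih (injective_quotSMulTop_map hi hiq hrN)
      (QuotSMulTop.map_exact r hiq hq) (QuotSMulTop.map_surjective r hq)
      (injective_quotSMulTop_map hj hju hrM)
      (QuotSMulTop.map_exact r hju hu) (QuotSMulTop.map_surjective r hu) hrs

theorem isWeaklyRegular_cons_of_mul {r s : R} {rs : List R}
    (h : IsWeaklyRegular M ((r * s) :: rs)) : IsWeaklyRegular M (r :: rs) := by
  obtain ⟨hrs, hrest⟩ := (isWeaklyRegular_cons_iff M (r * s) rs).mp h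
  obtain ⟨hr, hs⟩ := IsSMulRegular.mul_iff.mp hrs
  obtain ⟨i, q, hi, hiq, hq⟩ := exists_shortExact_quotSMulTop rfl hs
  obtain ⟨j, u, hj, hju, hu⟩ := exists_shortExact_quotSMulTop (mul_comm s r) hr
  exact .cons hr (isWeaklyRegular_of_shortExact_of_shortExact hi hiq hq hj hju hu hrest)

theorem isWeaklyRegular_of_forall₂_dvd {rs rs' : List R} (hdvd : List.Forall₂ (· ∣ ·) rs rs')
    (h : IsWeaklyRegular M rs') : IsWeaklyRegular M rs := by
  induction hdvd generalizing M with
  | nil => exact h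
  | cons hr _ ih =>
    obtain ⟨s, rfl⟩ := hr
    obtain ⟨hr, hrs⟩ := (isWeaklyRegular_cons_iff M _ _).mp (isWeaklyRegular_cons_of_mul h)
    exact .cons hr (ih hrs)

theorem pow_smul_top_eq_top {I : Ideal R} (hI : I • (⊤ : Submodule R M) = ⊤) (m : ℕ) :
    I ^ m • (⊤ : Submodule R M) = ⊤ := by
  induction m with
  | zero => rw [pow_zero, Submodule.one_smul]
  | succ m ih => rw [pow_succ, Submodule.mul_smul, hI, ih]

theorem isRegular_of_forall₂_pow {rs rs' : List R}
    (hpow : List.Forall₂ (fun r r' => ∃ m ≠ 0, r ^ m = r') rs rs') (h : IsRegular M rs') :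
    IsRegular M rs := by
  refine ⟨isWeaklyRegular_of_forall₂_dvd (hpow.imp ?_) h.toIsWeaklyRegular, fun htop => ?_⟩
  · rintro r _ ⟨m, hm, rfl⟩
    exact dvd_pow_self r hm
  have hrad : Ideal.ofList rs ≤ (Ideal.ofList rs').radical := by
    refine Ideal.span_le.mpr fun r hr => ?_
    obtain ⟨i, hi, rfl⟩ := List.mem_iff_getElem.mp hr
    obtain ⟨m, -, hm⟩ := hpow.get hi (hpow.length_eq ▸ hi)
    exact ⟨m, Ideal.subset_span (hm ▸ List.get_mem _ _)⟩
  have hfg : (Ideal.ofList rs).FG := Submodule.fg_span (List.finite_toSet rs)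
  obtain ⟨m, hm⟩ := Ideal.exists_pow_le_of_le_radical_of_fg hrad hfg
  refine h.top_ne_smul (top_le_iff.mp ?_).symm
  calc (⊤ : Submodule R M) = Ideal.ofList rs ^ m • ⊤ := (pow_smul_top_eq_top htop.symm m).symm
    _ ≤ Ideal.ofList rs' • ⊤ := Submodule.smul_mono_left hm

theorem isRegular_map_ringEquiv_iff {S : Type*} [CommRing S] (e : R ≃+* S) (rs : List R) :
    IsRegular S (rs.map e) ↔ IsRegular R rs :=
  (e.toAddEquiv.isRegular_congr <| List.forall₂_map_right_iff.mpr <|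
    List.forall₂_same.mpr fun r _ x => map_mul e r x).symm

end RegularSequences

section PolynomialRing

variable {σ τ K : Type*} [CommRing K]

theorem isRegular_map_X [Nontrivial K] {l : List σ} (hl : l.Nodup) :
    IsRegular (MvPolynomial σ K) (l.map (X : σ → MvPolynomial σ K)) := by
  refine ⟨⟨fun i hi => ?_⟩, ?_⟩
  · have hil : i < l.length := by simpa using hi
    have hideal : Ideal.ofList ((l.map (X : σ → MvPolynomial σ K)).take i) =
        Ideal.span (X '' {j | j ∈ l.take i}) := by
      rw [← List.map_take, Ideal.ofList]
      congr 1
      ext x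
      simp [-List.map_take]
    have hnotMem : l[i] ∉ l.take i := fun hmem => by
      obtain ⟨j, hj, hji⟩ := List.mem_take_iff_getElem.mp hmem
      have := hl.getElem_inj_iff.mp hji
      omega
    rw [isSMulRegular_quotient_iff_mem_of_smul_mem, smul_eq_mul, Ideal.mul_top, hideal]
    intro f hf
    rw [mem_ideal_span_X_image] at hf ⊢
    intro m hm
    obtain ⟨j, hj, hmj⟩ := hf (m + Finsupp.single l[i] 1) <| by
      rw [List.getElem_map, smul_eq_mul, mul_comm, mem_support_iff, coeff_mul_X]
      exact mem_support_iff.mp hm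
    have hne : l[i] ≠ j := fun h => hnotMem (h ▸ hj)
    exact ⟨j, hj, by simpa [Finsupp.single_apply, hne] using hmj⟩
  · have hle : Ideal.ofList (l.map (X : σ → MvPolynomial σ K)) ≤ RingHom.ker constantCoeff :=
      Ideal.span_le.mpr fun f hf => by
        obtain ⟨j, -, rfl⟩ := List.mem_map.mp hf
        simp
    rw [smul_eq_mul, Ideal.mul_top]
    exact fun htop => RingHom.ker_ne_top _ (top_le_iff.mp (htop ▸ hle))

theorem isRegular_map_basis_linearForm [Nontrivial K] [Fintype σ] (b : Module.Basis τ K (σ → K))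
    {l : List τ} (hl : l.Nodup) :
    IsRegular (MvPolynomial σ K) (l.map fun t => ∑ j, C (b t j) * X j) := by
  classical
  let e : MvPolynomial τ K ≃ₐ[K] MvPolynomial σ K :=
    (SymmetricAlgebra.equivMvPolynomial b).symm.trans
      (SymmetricAlgebra.equivMvPolynomial (Pi.basisFun K σ))
  have he (t : τ) : e (X t) = ∑ j, C (b t j) * X j := by
    simp [e, SymmetricAlgebra.equivMvPolynomial, Module.Basis.constr_apply_fintype, smul_eq_C_mul]
  have h := (isRegular_map_ringEquiv_iff e.toRingEquiv _).mpr (isRegular_map_X (K := K) hl)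
  rw [List.map_map] at h
  refine (congrArg _ (List.map_congr_left fun t _ => ?_)).mp h
  exact he t

end PolynomialRing

/-- The algebra `A[Xᵢ : i ∈ σ] / (gᵢ(Xᵢ))`, freely adjoining to `A` a root of each `gᵢ`. -/
abbrev AdjoinRoots {A σ : Type*} [CommRing A] (g : σ → Polynomial A) : Type _ :=
  MvPolynomial σ A ⧸ Ideal.span (Set.range fun i => Polynomial.aeval (X i : MvPolynomial σ A) (g i))

namespace AdjoinRoots

variable {A σ : Type*} [CommRing A] {g : σ → Polynomial A}

variable (g) in
/-- The adjoined root of `g i`, the class of the variable `Xᵢ`. -/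
noncomputable def root (i : σ) : AdjoinRoots g :=
  Ideal.Quotient.mk _ (X i)

@[simp]
theorem aeval_root (i : σ) : Polynomial.aeval (root g i) (g i) = 0 := by
  rw [root, ← Ideal.Quotient.mkₐ_eq_mk A, Polynomial.aeval_algHom_apply]
  exact Ideal.Quotient.eq_zero_iff_mem.mpr (Ideal.subset_span ⟨i, rfl⟩)

/-- The universal property: a family of roots `x i` of the `g i` in an `A`-algebra `B` gives the
`A`-algebra map `AdjoinRoots g → B` with `root g i ↦ x i`. -/
noncomputable def lift {B : Type*} [CommRing B] [Algebra A B] (x : σ → B)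
    (hx : ∀ i, Polynomial.aeval (x i) (g i) = 0) : AdjoinRoots g →ₐ[A] B :=
  Ideal.Quotient.liftₐ _ (aeval x) <| by
    suffices Ideal.span _ ≤ RingHom.ker (aeval x : MvPolynomial σ A →ₐ[A] B) from this
    refine Ideal.span_le.mpr ?_
    rintro _ ⟨i, rfl⟩
    simp [← Polynomial.aeval_algHom_apply, hx]

@[simp]
theorem lift_root {B : Type*} [CommRing B] [Algebra A B] (x : σ → B)
    (hx : ∀ i, Polynomial.aeval (x i) (g i) = 0) (i : σ) : lift x hx (root g i) = x i :=
  aeval_X x i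

theorem algHom_ext {B : Type*} [CommRing B] [Algebra A B] {u v : AdjoinRoots g →ₐ[A] B}
    (h : ∀ i, u (root g i) = v (root g i)) : u = v :=
  Ideal.Quotient.algHom_ext A (MvPolynomial.algHom_ext h)

variable (g) in
/-- The map sending the root of `g i` in the `i`-th tensor factor to `root g i`. -/
noncomputable def ofPiTensorProduct [Fintype σ] :
    (⨂[A] i, AdjoinRoot (g i)) →ₐ[A] AdjoinRoots g :=
  PiTensorProduct.liftAlgHom
    ((MultilinearMap.mkPiAlgebra A σ (AdjoinRoots g)).compLinearMap fun i =>
      (AdjoinRoot.liftAlgHom (g i) (Algebra.ofId A _) (root g i) (aeval_root i)).toLinearMap)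
    (by simp) (by simp [Finset.prod_mul_distrib])

@[simp]
theorem ofPiTensorProduct_singleAlgHom_root [Fintype σ] [DecidableEq σ] (i : σ) :
    ofPiTensorProduct g (PiTensorProduct.singleAlgHom i (AdjoinRoot.root (g i))) = root g i := by
  have hterm (j : σ) : AdjoinRoot.liftAlgHom (g j) (Algebra.ofId A _) (root g j) (aeval_root j)
      (Pi.mulSingle (M := fun j => AdjoinRoot (g j)) i (AdjoinRoot.root (g i)) j) =
      if j = i then root g i else 1 := by
    rcases eq_or_ne j i with rfl | hji
    · rw [Pi.mulSingle_eq_same, if_pos rfl]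
      exact AdjoinRoot.liftAlgHom_root ..
    · rw [Pi.mulSingle_eq_of_ne hji, if_neg hji, map_one]
  refine (PiTensorProduct.lift.tprod _).trans ?_
  exact (Finset.prod_congr rfl fun j _ => hterm j).trans (by simp)

variable (g) in
/-- `AdjoinRoots g` as the tensor product over `i` of the one-root extensions `AdjoinRoot (g i)`. -/
noncomputable def equivPiTensorProduct [Fintype σ] [DecidableEq σ] :
    AdjoinRoots g ≃ₐ[A] ⨂[A] i, AdjoinRoot (g i) :=
  .ofAlgHom
    (lift (fun i => PiTensorProduct.singleAlgHom i (AdjoinRoot.root (g i))) fun i => by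
      rw [Polynomial.aeval_algHom_apply, AdjoinRoot.aeval_eq, AdjoinRoot.mk_self, map_zero])
    (ofPiTensorProduct g)
    (PiTensorProduct.algHom_ext fun i => AdjoinRoot.algHom_ext <| by
      simp [-PiTensorProduct.singleAlgHom_apply])
    (algHom_ext fun i => by simp [-PiTensorProduct.singleAlgHom_apply])

/-- The basis of `AdjoinRoots g` in which `x ∈ Π i, Fin (g i).natDegree` indexes the monomial
`∏ i, root g i ^ x i`. -/
noncomputable def basis [Finite σ] (hg : ∀ i, (g i).Monic) :
    Module.Basis (∀ i, Fin (g i).natDegree) A (AdjoinRoots g) :=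
  have := Fintype.ofFinite σ
  have := Classical.decEq σ
  (Basis.piTensorProduct fun i => (AdjoinRoot.powerBasis' (hg i)).basis).map
    (equivPiTensorProduct g).symm.toLinearEquiv

theorem faithfullyFlat [Finite σ] (hg : ∀ i, (g i).Monic) (hdeg : ∀ i, (g i).natDegree ≠ 0) :
    Module.FaithfullyFlat A (AdjoinRoots g) :=
  have : Nonempty (∀ i, Fin (g i).natDegree) := ⟨fun i => ⟨0, Nat.pos_of_ne_zero (hdeg i)⟩⟩
  .of_linearEquiv _ _ (basis hg).repr

theorem isRegular_map_root_append [Finite σ] {p : σ → ℕ} (hp : ∀ i, p i ≠ 0) {a : σ → A}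
    {is : List σ} {rs : List A} (h : IsRegular A (is.map a ++ rs)) :
    IsRegular (AdjoinRoots fun i => (.X ^ p i - .C (a i) : Polynomial A))
      (is.map (root fun i => .X ^ p i - .C (a i)) ++ rs.map (algebraMap A _)) := by
  have := h.nontrivial
  let g (i : σ) : Polynomial A := .X ^ p i - .C (a i)
  have := faithfullyFlat (g := g) (fun i => Polynomial.monic_X_pow_sub_C (a i) (hp i))
    fun i => Polynomial.natDegree_X_pow_sub_C.trans_ne (hp i)
  have hB := h.of_faithfullyFlat (S := AdjoinRoots g)
  rw [List.map_append, List.map_map] at hB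
  refine isRegular_of_forall₂_pow (List.rel_append ?_ ?_) hB
  · refine List.forall₂_map_left_iff.mpr (List.forall₂_map_right_iff.mpr ?_)
    refine List.forall₂_same.mpr fun i _ => ⟨p i, hp i, ?_⟩
    simpa [g, sub_eq_zero] using aeval_root (g := g) i
  · exact List.forall₂_same.mpr fun r _ => ⟨1, one_ne_zero, pow_one r⟩

end AdjoinRoots

namespace GLring

variable {k : Type*} [Field k] {d n : ℕ} {p : Fin n → ℕ} {lam : Fin n → Fin (d + 1) → k}

variable (k d n p lam) in
/-- `R` as the algebra over `k[T_0,…,T_d]` generated by `p_i`-th roots of the `ℓ_i`. -/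
noncomputable def equivAdjoinRoots : GLring k d n p lam ≃+*
    AdjoinRoots fun i => (.X ^ p i - .C (∑ j, C (lam i j) * X j) :
      Polynomial (MvPolynomial (Fin (d + 1)) k)) :=
  let e : MvPolynomial (Fin (d + 1) ⊕ Fin n) k ≃+* MvPolynomial (Fin n) (MvPolynomial _ k) :=
    (renameEquiv k (Equiv.sumComm _ _)).toRingEquiv.trans (sumRingEquiv k _ _)
  Ideal.quotientEquiv _ _ e <| by
    rw [Ideal.map_span, ← Set.range_comp]
    congr 2
    ext1 i
    simp [e, GLh, algebraMap_eq, sumRingEquiv_X_inl]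

theorem equivAdjoinRoots_mk_X_inr (i : Fin n) :
    equivAdjoinRoots k d n p lam (Ideal.Quotient.mk _ (X (.inr i))) = AdjoinRoots.root _ i := by
  simp [equivAdjoinRoots, AdjoinRoots.root]

theorem equivAdjoinRoots_mk_linearForm (c : Fin (d + 1) → k) :
    equivAdjoinRoots k d n p lam (Ideal.Quotient.mk _ (∑ j, C (c j) * X (.inl j))) =
      algebraMap _ _ (∑ j, C (c j) * X j : MvPolynomial (Fin (d + 1)) k) := by
  simp [equivAdjoinRoots, ← Ideal.Quotient.mk_algebraMap, algebraMap_eq]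

end GLring

/-- Let `i_0, …, i_s` be distinct elements of `{1,…,n}` (an injection
`ι : Fin (s+1) → Fin n`) with `s ≤ d`, and let `f_{s+1}, …, f_d` be homogeneous linear
forms in `T_0,…,T_d` (given by coefficient rows `μ : Fin (d−s) → Fin (d+1) → k`). If the
linear forms `ℓ_{i_0}, …, ℓ_{i_s}, f_{s+1}, …, f_d` are linearly independent over `k`,
then the images of `(X_{i_0}, …, X_{i_s}, f_{s+1}, …, f_d)` form a regular sequence in
`R = S/(h_1,…,h_n)`. -/
theorem X_f_isRegularSequence (k : Type*) [Field k] (d n : ℕ) (hd : 1 ≤ d)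
    (p : Fin n → ℕ) (hp : ∀ i, 0 < p i) (lam : Fin n → Fin (d + 1) → k)
    (s : ℕ) (hs : s ≤ d) (ι : Fin (s + 1) → Fin n) (hι : Function.Injective ι)
    (μ : Fin (d - s) → Fin (d + 1) → k)
    (hindep : LinearIndependent k (Sum.elim (fun t : Fin (s + 1) => lam (ι t)) μ)) :
    RingTheory.Sequence.IsRegular (GLring k d n p lam)
      (List.ofFn (fun t : Fin (s + 1) =>
          Ideal.Quotient.mk (Ideal.span (Set.range (GLh k d n p lam))) (X (Sum.inr (ι t)))) ++
        List.ofFn (fun l : Fin (d - s) =>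
          Ideal.Quotient.mk (Ideal.span (Set.range (GLh k d n p lam)))
            (∑ j, C (μ l j) * X (Sum.inl j)))) := by
  have hcard : Fintype.card (Fin (s + 1) ⊕ Fin (d - s)) = Module.finrank k (Fin (d + 1) → k) := by
    simp only [Fintype.card_sum, Fintype.card_fin, Module.finrank_fin_fun]
    omega
  let b := basisOfLinearIndependentOfCardEqFinrank hindep hcard
  have hb : ⇑b = Sum.elim (fun t => lam (ι t)) μ :=
    coe_basisOfLinearIndependentOfCardEqFinrank ..
  have hnodup : (List.ofFn Sum.inl ++ List.ofFn Sum.inr : List (Fin (s + 1) ⊕ Fin (d - s))).Nodup :=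
    .append (List.nodup_ofFn.mpr Sum.inl_injective) (List.nodup_ofFn.mpr Sum.inr_injective) <| by
      simp [List.disjoint_left]
  have hforms := isRegular_map_basis_linearForm b hnodup
  refine (isRegular_map_ringEquiv_iff (GLring.equivAdjoinRoots k d n p lam) _).mp ?_
  have hroots := AdjoinRoots.isRegular_map_root_append (p := p) (fun i => (hp i).ne')
    (a := fun i => ∑ j, C (lam i j) * X j) (is := List.ofFn ι)
    (rs := List.ofFn fun l => ∑ j, C (μ l j) * X j)
    (by simpa [hb, List.map_ofFn, Function.comp_def] using hforms)
  simpa only [List.map_append, List.map_ofFn, Function.comp_def,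
    GLring.equivAdjoinRoots_mk_X_inr, GLring.equivAdjoinRoots_mk_linearForm] using hroots
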